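/- arXiv:2503.22323 — 4 statements merged into one kernel-verified Lean document; each statement's English description precedes it below -/
import Mathlib

section
/- Let m, k, ℓ be nonnegative integers such that m + k − ℓ is even and 0 ≤ (m + k − ℓ)/2 ≤ min(k,m), and let λ̃ ∈ ℂ. Define μ := (1 − λ̃, (λ̃ + m)/2, (λ̃ − m − 2)/2) ∈ ℂ³ and η := (1 − λ̃ − k, (λ̃ + k + ℓ)/2, (λ̃ + k − ℓ − 2)/2) ∈ ℂ³. Then there exists a permutation σ of {1,2,3} with η_i = μ_{σ(i)} for i = 1, 2, 3 if and only if one of the following holds: (a) k = 0 and ℓ = m; (b) ℓ = m + k and λ̃ = (2 − m − 2k)/3; (c) m ≥ k, ℓ = m − k and λ̃ = (4 + m − 2k)/3. -/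
/-- matching of infinitesimal characters.  With
`μ = (1 − λ̃, (λ̃+m)/2, (λ̃−m−2)/2)` and `η = (1 − λ̃ − k, (λ̃+k+ℓ)/2, (λ̃+k−ℓ−2)/2)`,
under the parity/range hypothesis on `(m,k,ℓ)`, the coordinates of `η` are a permutation
of those of `μ` iff (a) `k = 0, ℓ = m`, or (b) `ℓ = m+k, λ̃ = (2−m−2k)/3`, or
(c) `m ≥ k, ℓ = m−k, λ̃ = (4+m−2k)/3`. -/
theorem stmt2 (m k l : ℕ) (lam : ℂ)
    (hpar : ∃ d : ℤ, (m : ℤ) + k - l = 2 * d ∧ 0 ≤ d ∧ d ≤ min (k : ℤ) (m : ℤ)) :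
    (∃ σ : Equiv.Perm (Fin 3),
      ∀ i : Fin 3,
        (![1 - lam - k, (lam + k + l) / 2, (lam + k - l - 2) / 2] : Fin 3 → ℂ) i
          = (![1 - lam, (lam + m) / 2, (lam - m - 2) / 2] : Fin 3 → ℂ) (σ i))
    ↔ ((k = 0 ∧ l = m)
        ∨ (l = m + k ∧ lam = (2 - (m : ℂ) - 2 * k) / 3)
        ∨ ((k : ℤ) ≤ (m : ℤ) ∧ (l : ℤ) = (m : ℤ) - (k : ℤ)
            ∧ lam = (4 + (m : ℂ) - 2 * k) / 3)) := by
  obtain ⟨d, hd, hd0, hd1⟩ := hpar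
  have hdk : d ≤ k := le_trans hd1 (min_le_left _ _)
  have hdm : d ≤ m := le_trans hd1 (min_le_right _ _)
  constructor
  · rintro ⟨σ, h⟩
    have h0 := h 0
    have h1 := h 1
    have h2 := h 2
    have n01 : σ 0 ≠ σ 1 := fun e => by simpa using σ.injective e
    have n02 : σ 0 ≠ σ 2 := fun e => by simpa using σ.injective e
    have n12 : σ 1 ≠ σ 2 := fun e => by simpa using σ.injective e
    generalize σ 0 = a at *
    generalize σ 1 = b at *
    generalize σ 2 = c at *
    clear h
    fin_cases a
    · left
      simp at h0
      omega
    · right; left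
      simp at h0
      have hl : lam = (2 - (m : ℂ) - 2 * k) / 3 := by linear_combination (-2/3) * h0
      refine ⟨?_, hl⟩
      fin_cases b
      · simp at h1
        have : (l : ℂ) = ((m + k : ℕ) : ℂ) := by
          push_cast; linear_combination 2 * h1 - 3 * hl
        exact_mod_cast this
      · exact absurd rfl n01
      · fin_cases c
        · simp at h2
          have : ((k + m + 2 + l : ℕ) : ℂ) = ((0 : ℕ) : ℂ) := by
            push_cast; linear_combination -2 * h2 + 3 * hl
          have : k + m + 2 + l = 0 := by exact_mod_cast this
          omega
        · exact absurd rfl n02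
        · exact absurd rfl n12
    · right; right
      simp at h0
      have hl : lam = (4 + (m : ℂ) - 2 * k) / 3 := by linear_combination (-2/3) * h0
      have key : (l : ℤ) = (m : ℤ) - (k : ℤ) := by
        fin_cases b
        · simp at h1
          have : ((2 + m + l : ℕ) : ℂ) = ((k : ℕ) : ℂ) := by
            push_cast; linear_combination 2 * h1 - 3 * hl
          have : 2 + m + l = k := by exact_mod_cast this
          omega
        · fin_cases c
          · simp at h2
            have : ((l + k : ℕ) : ℂ) = ((m : ℕ) : ℂ) := by
              push_cast; linear_combination -2 * h2 + 3 * hl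
            have : l + k = m := by exact_mod_cast this
            omega
          · exact absurd rfl n12
          · exact absurd rfl n02
        · exact absurd rfl n01
      exact ⟨by omega, key, hl⟩
  · rintro (⟨rfl, rfl⟩ | ⟨rfl, rfl⟩ | ⟨h1, h2, rfl⟩)
    · refine ⟨1, fun i => ?_⟩
      fin_cases i <;> simp
    · refine ⟨Equiv.swap 0 1, fun i => ?_⟩
      have e : Equiv.swap (0 : Fin 3) 1 2 = 2 := by decide
      fin_cases i <;> simp [e] <;> ring
    · have hm : m = l + k := by omega
      subst hm
      refine ⟨Equiv.swap 0 2, fun i => ?_⟩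
      have e : Equiv.swap (0 : Fin 3) 2 1 = 1 := by decide
      fin_cases i <;> simp [e] <;> ring
end

section
/- Let m, k be integers with m ≥ k ≥ 0 and set μ := (1/3)(2k − m − 1, 2m − k + 2, −(m + k + 1)) ∈ ℝ³ and η := (1/3)(−(m + k + 1), 2m − k + 2, 2k − m − 1) ∈ ℝ³. Then η = s_{ε₁−ε₃}μ and ⟨μ, (ε₁−ε₃)^∨⟩ = k, so the one-term sequence (ε₁−ε₃) links μ to η; moreover neither the sequence (ε₁−ε₂, ε₂−ε₃, ε₁−ε₂) nor the sequence (ε₂−ε₃, ε₁−ε₂, ε₂−ε₃) links μ to η. -/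
open Finset

/-- The standard inner product on ℝ³. -/
noncomputable def ip (x y : Fin 3 → ℝ) : ℝ := ∑ i, x i * y i

/-- The coroot `β^∨ = 2β/⟨β,β⟩` of a nonzero vector `β`. -/
noncomputable def coroot (β : Fin 3 → ℝ) : Fin 3 → ℝ := (2 / ip β β) • β

/-- The reflection `s_β(x) = x − ⟨x,β^∨⟩β`. -/
noncomputable def sRefl (β x : Fin 3 → ℝ) : Fin 3 → ℝ := x - (ip x (coroot β)) • β

/-- The root `ε_i − ε_j = e_i − e_j`. -/
noncomputable def eps (i j : Fin 3) : Fin 3 → ℝ :=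
  fun t => (if t = i then 1 else 0) - (if t = j then 1 else 0)

/-- Bernstein–Gelfand–Gelfand: a sequence `(β₁, …, β_t)` links `ξ` to `ζ` if, with
`ξ₀ := ξ` and `ξ_i := s_{β_i} ξ_{i−1}`, one has `ξ_t = ζ` and each `⟨ξ_{i−1}, β_i^∨⟩`
is a nonnegative integer. -/
def LinksSeq : List (Fin 3 → ℝ) → (Fin 3 → ℝ) → (Fin 3 → ℝ) → Prop
  | [], ξ, ζ => ξ = ζ
  | β :: bs, ξ, ζ => (∃ n : ℕ, ip ξ (coroot β) = n) ∧ LinksSeq bs (sRefl β ξ) ζ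

lemma ip_coroot_eps (x : Fin 3 → ℝ) (i j : Fin 3) (h : i ≠ j) :
    ip x (coroot (eps i j)) = x i - x j := by
  fin_cases i <;> fin_cases j <;> simp [ip, coroot, eps, Fin.sum_univ_three] at h ⊢ <;> ring

/-- for integers `m ≥ k ≥ 0`, with `μ = (1/3)(2k−m−1, 2m−k+2, −(m+k+1))` and
`η = (1/3)(−(m+k+1), 2m−k+2, 2k−m−1)`, one has `η = s_{ε₁−ε₃}μ` and `⟨μ,(ε₁−ε₃)^∨⟩ = k`,
so `(ε₁−ε₃)` links `μ` to `η`; moreover neither `(ε₁−ε₂, ε₂−ε₃, ε₁−ε₂)` nor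
`(ε₂−ε₃, ε₁−ε₂, ε₂−ε₃)` links `μ` to `η`. -/
theorem stmt4 (m k : ℤ) (hk : 0 ≤ k) (hmk : k ≤ m)
    (μ η : Fin 3 → ℝ)
    (hμ : μ = ![(2 * (k : ℝ) - m - 1) / 3, (2 * (m : ℝ) - k + 2) / 3,
                 -((m : ℝ) + k + 1) / 3])
    (hη : η = ![-((m : ℝ) + k + 1) / 3, (2 * (m : ℝ) - k + 2) / 3,
                 (2 * (k : ℝ) - m - 1) / 3]) :
    η = sRefl (eps 0 2) μ ∧
    ip μ (coroot (eps 0 2)) = (k : ℝ) ∧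
    LinksSeq [eps 0 2] μ η ∧
    ¬ LinksSeq [eps 0 1, eps 1 2, eps 0 1] μ η ∧
    ¬ LinksSeq [eps 1 2, eps 0 1, eps 1 2] μ η := by
  have hkR : (0 : ℝ) ≤ k := by exact_mod_cast hk
  have hmR : (k : ℝ) ≤ m := by exact_mod_cast hmk
  have h1 : ip μ (coroot (eps 0 2)) = (k : ℝ) := by
    rw [ip_coroot_eps _ _ _ (by decide), hμ]
    simp
    ring
  have h0 : η = sRefl (eps 0 2) μ := by
    unfold sRefl
    rw [h1, hμ, hη]
    ext t
    fin_cases t <;> simp [eps] <;> ring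
  refine ⟨h0, h1, ⟨⟨k.toNat, ?_⟩, h0.symm⟩, ?_, ?_⟩
  · rw [h1]
    exact_mod_cast (Int.toNat_of_nonneg hk).symm
  · rintro ⟨⟨n, hn⟩, -⟩
    rw [ip_coroot_eps _ _ _ (by decide), hμ] at hn
    have := Nat.cast_nonneg (α := ℝ) n
    simp at hn
    linarith
  · rintro ⟨-, -, ⟨n, hn⟩, -⟩
    have := Nat.cast_nonneg (α := ℝ) n
    rw [ip_coroot_eps _ _ _ (by decide)] at hn
    unfold sRefl at hn
    simp only [ip_coroot_eps _ (1 : Fin 3) 2 (by decide),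
      ip_coroot_eps _ (0 : Fin 3) 1 (by decide), hμ] at hn
    simp [eps, Matrix.vecHead, Matrix.vecTail] at hn
    linarith
end

section
/- Let k, m be nonnegative integers and d an integer with 0 ≤ d ≤ min(k,m). The subspace of polynomials F ∈ ℂ[N₁, N₂, e₁, e₂, ε₁, ε₂] that are simultaneously homogeneous of degree k in (N₁,N₂), of degree m in (e₁,e₂), and of degree m + k − 2d in (ε₁,ε₂), and that satisfy g·F = F for all g ∈ SL(2,ℝ), is one-dimensional; it is spanned by ψ := (N₁ε₁ + N₂ε₂)^{k−d} · (e₁ε₁ + e₂ε₂)^{m−d} · (N₁e₂ − N₂e₁)^{d}. -/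
open MvPolynomial

noncomputable section

/-- The `(i,j)` entry of `g ∈ SL(2,ℝ)`, viewed as a complex number. -/
def gEntry (g : Matrix.SpecialLinearGroup (Fin 2) ℝ) (i j : Fin 2) : ℂ :=
  (((g : Matrix (Fin 2) (Fin 2) ℝ) i j : ℝ) : ℂ)

/-- The `(i,j)` entry of `g⁻¹`, viewed as a complex number. -/
def gInvEntry (g : Matrix.SpecialLinearGroup (Fin 2) ℝ) (i j : Fin 2) : ℂ :=
  ((((g⁻¹ : Matrix.SpecialLinearGroup (Fin 2) ℝ) : Matrix (Fin 2) (Fin 2) ℝ) i j : ℝ) : ℂ)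

/-- The action of `g ∈ SL(2,ℝ)` on `ℂ[N₁,N₂,e₁,e₂,ε₁,ε₂]` by linear substitution:
`(g·F)(N,e,ε) = F(gᵀN, gᵀe, g⁻¹ε)`.  Variables: `N₁ = X 0, N₂ = X 1, e₁ = X 2,
e₂ = X 3, ε₁ = X 4, ε₂ = X 5`. -/
def slAct (g : Matrix.SpecialLinearGroup (Fin 2) ℝ) :
    MvPolynomial (Fin 6) ℂ →ₐ[ℂ] MvPolynomial (Fin 6) ℂ :=
  aeval ![gEntry g 0 0 • X 0 + gEntry g 1 0 • X 1,
          gEntry g 0 1 • X 0 + gEntry g 1 1 • X 1,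
          gEntry g 0 0 • X 2 + gEntry g 1 0 • X 3,
          gEntry g 0 1 • X 2 + gEntry g 1 1 • X 3,
          gInvEntry g 0 0 • X 4 + gInvEntry g 0 1 • X 5,
          gInvEntry g 1 0 • X 4 + gInvEntry g 1 1 • X 5]

/-- `ψ = (N₁ε₁+N₂ε₂)^{k−d} (e₁ε₁+e₂ε₂)^{m−d} (N₁e₂−N₂e₁)^d`. -/
def psi (k m d : ℕ) : MvPolynomial (Fin 6) ℂ :=
  (X 0 * X 4 + X 1 * X 5) ^ (k - d) * (X 2 * X 4 + X 3 * X 5) ^ (m - d) *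
    (X 0 * X 3 - X 1 * X 2) ^ d

lemma gInv00 (g : Matrix.SpecialLinearGroup (Fin 2) ℝ) : gInvEntry g 0 0 = gEntry g 1 1 := by
  simp [gEntry, gInvEntry, Matrix.SpecialLinearGroup.coe_inv, Matrix.adjugate_fin_two]

lemma gInv01 (g : Matrix.SpecialLinearGroup (Fin 2) ℝ) : gInvEntry g 0 1 = - gEntry g 0 1 := by
  simp [gEntry, gInvEntry, Matrix.SpecialLinearGroup.coe_inv, Matrix.adjugate_fin_two]

lemma gInv10 (g : Matrix.SpecialLinearGroup (Fin 2) ℝ) : gInvEntry g 1 0 = - gEntry g 1 0 := by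
  simp [gEntry, gInvEntry, Matrix.SpecialLinearGroup.coe_inv, Matrix.adjugate_fin_two]

lemma gInv11 (g : Matrix.SpecialLinearGroup (Fin 2) ℝ) : gInvEntry g 1 1 = gEntry g 0 0 := by
  simp [gEntry, gInvEntry, Matrix.SpecialLinearGroup.coe_inv, Matrix.adjugate_fin_two]

lemma coeff_scale (a : Fin 6 → ℂ) (F : MvPolynomial (Fin 6) ℂ) (c : Fin 6 →₀ ℕ) :
    coeff c (aeval (fun i => a i • (X i : MvPolynomial (Fin 6) ℂ)) F)
      = (∏ i, a i ^ c i) * coeff c F := by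
  induction F using MvPolynomial.induction_on' with
  | monomial u r =>
    have h : aeval (fun i => a i • (X i : MvPolynomial (Fin 6) ℂ)) (monomial u r)
        = monomial u ((∏ i, a i ^ u i) * r) := by
      rw [aeval_monomial, Finsupp.prod_fintype _ _ (by simp)]
      simp only [MvPolynomial.smul_eq_C_mul, Finset.prod_mul_distrib,
        mul_pow, ← map_pow, ← map_prod]
      rw [monomial_eq, Finsupp.prod_fintype _ _ (by simp)]
      simp only [algebraMap_eq, map_mul]
      ring
    rw [h, coeff_monomial, coeff_monomial]
    split_ifs with h
    · rw [h]
    · simp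
  | add p q hp hq => rw [map_add, coeff_add, hp, hq, coeff_add, mul_add]

lemma eval_slAct (g : Matrix.SpecialLinearGroup (Fin 2) ℝ) (F : MvPolynomial (Fin 6) ℂ)
    (x : Fin 6 → ℂ) :
    eval x (slAct g F) = eval ![gEntry g 0 0 * x 0 + gEntry g 1 0 * x 1,
          gEntry g 0 1 * x 0 + gEntry g 1 1 * x 1,
          gEntry g 0 0 * x 2 + gEntry g 1 0 * x 3,
          gEntry g 0 1 * x 2 + gEntry g 1 1 * x 3,
          gInvEntry g 0 0 * x 4 + gInvEntry g 0 1 * x 5,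
          gInvEntry g 1 0 * x 4 + gInvEntry g 1 1 * x 5] F := by
  rw [slAct, ← coe_aeval_eq_eval, ← coe_aeval_eq_eval]
  simp only [RingHom.coe_coe]
  rw [comp_aeval_apply]
  congr 2
  funext i
  fin_cases i <;> simp

def gTorus : Matrix.SpecialLinearGroup (Fin 2) ℝ :=
  ⟨!![2, 0; 0, 1 / 2], by simp [Matrix.det_fin_two]⟩

lemma weight_eq (F : MvPolynomial (Fin 6) ℂ) (hF : slAct gTorus F = F)
    (c : Fin 6 →₀ ℕ) (hc : coeff c F ≠ 0) : c 0 + c 2 + c 5 = c 1 + c 3 + c 4 := by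
  have h := coeff_scale ![2, 1 / 2, 2, 1 / 2, 1 / 2, 2] F c
  have h2 : aeval (fun i => (![2, 1 / 2, 2, 1 / 2, 1 / 2, 2] : Fin 6 → ℂ) i •
      (X i : MvPolynomial (Fin 6) ℂ)) F = F := by
    conv_rhs => rw [← hF, slAct, gInv00, gInv01, gInv10, gInv11]
    congr 2
    funext i
    fin_cases i <;>
      simp [gEntry, gTorus]
  rw [h2] at h
  have h3 : (∏ i, (![2, 1 / 2, 2, 1 / 2, 1 / 2, 2] : Fin 6 → ℂ) i ^ c i) = 1 := by
    apply mul_right_cancel₀ hc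
    rw [← h, one_mul]
  simp [Fin.prod_univ_succ] at h3
  have h4 : (2 : ℂ) ^ (c 0 + c 2 + c 5) = 2 ^ (c 1 + c 3 + c 4) := by
    have e : ∀ n : ℕ, (2 : ℂ) ^ n ≠ 0 := fun n => pow_ne_zero n two_ne_zero
    have e1 := e (c 1)
    have e3 := e (c 3)
    have e4 := e (c 4)
    simp only [pow_add]
    change (2 : ℂ) ^ c 0 * ((2 ^ c 1)⁻¹ * (2 ^ c 2 * ((2 ^ c 3)⁻¹ * ((2 ^ c 4)⁻¹ * 2 ^ c 5)))) = 1 at h3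
    field_simp at h3
    linear_combination h3
  have h5 : (2 : ℕ) ^ (c 0 + c 2 + c 5) = 2 ^ (c 1 + c 3 + c 4) := by exact_mod_cast h4
  exact Nat.pow_right_injective le_rfl h5

lemma eval_normal (k m d : ℕ) (hdk : d ≤ k) (hdm : d ≤ m) (F : MvPolynomial (Fin 6) ℂ)
    (hs : ∀ c ∈ F.support, c 0 + c 1 = k ∧ c 2 + c 3 = m ∧ c 4 + c 5 = m + k - 2 * d)
    (hF : slAct gTorus F = F) :
    ∃ a : ℂ, ∀ D p r : ℂ, eval ![1, 0, 0, D, p, r] F = a * (D ^ m * p ^ (k - d) * r ^ (m - d)) := by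
  let cs : Fin 6 →₀ ℕ := Finsupp.equivFunOnFinite.symm ![k, 0, 0, m, k - d, m - d]
  have q0 : cs 0 = k := rfl
  have q1 : cs 1 = 0 := rfl
  have q2 : cs 2 = 0 := rfl
  have q3 : cs 3 = m := rfl
  have q4 : cs 4 = k - d := rfl
  have q5 : cs 5 = m - d := rfl
  clear_value cs
  refine ⟨coeff cs F, fun D p r => ?_⟩
  rw [eval_eq', Finset.sum_eq_single cs]
  · simp [Fin.prod_univ_six, q0, q1, q2, q3, q4, q5]
  · intro c hc hne
    obtain ⟨h1, h2, h3⟩ := hs c hc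
    have hw := weight_eq F hF c (mem_support_iff.1 hc)
    by_cases hc1 : c 1 = 0
    · by_cases hc2 : c 2 = 0
      · exfalso
        apply hne
        ext i
        fin_cases i <;> simp [q0, q1, q2, q3, q4, q5] <;> omega
      · rw [Finset.prod_eq_zero (Finset.mem_univ 2), mul_zero]
        simp [hc2]
    · rw [Finset.prod_eq_zero (Finset.mem_univ 1), mul_zero]
      simp [hc1]
  · intro h
    rw [notMem_support_iff.1 h, zero_mul]

lemma invariant_eq (k m d : ℕ) (hdk : d ≤ k) (hdm : d ≤ m) (F : MvPolynomial (Fin 6) ℂ)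
    (hs : ∀ c ∈ F.support, c 0 + c 1 = k ∧ c 2 + c 3 = m ∧ c 4 + c 5 = m + k - 2 * d)
    (hF : ∀ g : Matrix.SpecialLinearGroup (Fin 2) ℝ, slAct g F = F) :
    ∃ a : ℂ, F = a • psi k m d := by
  obtain ⟨a, ha⟩ := eval_normal k m d hdk hdm F hs (hF _)
  refine ⟨a, ?_⟩
  have hD : (X 0 * X 3 - X 1 * X 2 : MvPolynomial (Fin 6) ℂ) ≠ 0 := by
    intro h
    have := congrArg (eval ![1, 0, 0, 1, 1, 1]) h
    simp at this
  apply mul_left_cancel₀ hD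
  apply MvPolynomial.funext_set (fun _ => Set.range ((↑) : ℝ → ℂ))
    (fun _ => Set.infinite_range_of_injective Complex.ofReal_injective)
  intro x hx
  have hx' : ∀ i, ∃ y : ℝ, (y : ℂ) = x i := fun i => hx i (Set.mem_univ i)
  choose y hy using hx'
  obtain rfl : (fun i => (y i : ℂ)) = x := funext hy
  rw [map_mul, map_mul]
  by_cases h0 : y 0 * y 3 - y 1 * y 2 = 0
  · have : (y 0 * y 3 - y 1 * y 2 : ℂ) = 0 := by exact_mod_cast h0
    simp [this]
  congr 1
  set Δ := y 0 * y 3 - y 1 * y 2 with hΔ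
  let g : Matrix.SpecialLinearGroup (Fin 2) ℝ :=
    ⟨!![y 3 / Δ, - y 1; - y 2 / Δ, y 0], by
      rw [Matrix.det_fin_two_of]; field_simp; rw [hΔ]; ring⟩
  have hΔC : (Δ : ℂ) ≠ 0 := by exact_mod_cast h0
  have hΔ' : (Δ : ℂ) = y 0 * y 3 - y 1 * y 2 := by rw [hΔ]; push_cast; ring
  have key := eval_slAct g F (fun i => (y i : ℂ))
  rw [hF g] at key
  have hv : ![gEntry g 0 0 * y 0 + gEntry g 1 0 * y 1,
          gEntry g 0 1 * y 0 + gEntry g 1 1 * y 1,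
          gEntry g 0 0 * y 2 + gEntry g 1 0 * y 3,
          gEntry g 0 1 * y 2 + gEntry g 1 1 * y 3,
          gInvEntry g 0 0 * y 4 + gInvEntry g 0 1 * y 5,
          gInvEntry g 1 0 * y 4 + gInvEntry g 1 1 * y 5]
        = ![1, 0, 0, (Δ : ℂ), y 0 * y 4 + y 1 * y 5, (y 2 * y 4 + y 3 * y 5) / Δ] := by
    rw [gInv00, gInv01, gInv10, gInv11]
    funext i
    fin_cases i <;>
      simp [gEntry, g] <;>
      (try field_simp) <;> (try rw [hΔ']) <;> (try ring)
  rw [key, hv, ha]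
  simp only [psi, smul_eval, map_mul, map_pow, map_add, map_sub, eval_X]
  rw [← hΔ', div_pow]
  have : (Δ : ℂ) ^ m = Δ ^ d * Δ ^ (m - d) := by rw [← pow_add]; congr 1; omega
  rw [this]
  field_simp

lemma slAct_psi (k m d : ℕ) (g : Matrix.SpecialLinearGroup (Fin 2) ℝ) :
    slAct g (psi k m d) = psi k m d := by
  have hdet : gEntry g 0 0 * gEntry g 1 1 - gEntry g 0 1 * gEntry g 1 0 = 1 := by
    have := g.det_coe
    rw [Matrix.det_fin_two] at this
    simp only [gEntry]
    exact_mod_cast this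
  have hC : (C (gEntry g 0 0) * C (gEntry g 1 1) - C (gEntry g 0 1) * C (gEntry g 1 0) :
      MvPolynomial (Fin 6) ℂ) = 1 := by
    rw [← map_mul, ← map_mul, ← map_sub, hdet, map_one]
  simp only [psi, map_mul, map_pow, map_add, map_sub]
  congr 1
  · congr 1
    · congr 1
      simp [slAct, gInv00, gInv01, gInv10, gInv11, MvPolynomial.smul_eq_C_mul]
      linear_combination (X 0 * X 4 + X 1 * X 5) * hC
    · congr 1
      simp [slAct, gInv00, gInv01, gInv10, gInv11, MvPolynomial.smul_eq_C_mul]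
      linear_combination (X 2 * X 4 + X 3 * X 5) * hC
  · congr 1
    simp [slAct, MvPolynomial.smul_eq_C_mul]
    linear_combination (X 0 * X 3 - X 1 * X 2) * hC

lemma psi_whom (k m d : ℕ) (w : Fin 6 → ℕ) (A B E : ℕ)
    (h1 : w 0 + w 4 = A) (h1' : w 1 + w 5 = A) (h2 : w 2 + w 4 = B) (h2' : w 3 + w 5 = B)
    (h3 : w 0 + w 3 = E) (h3' : w 1 + w 2 = E) :
    IsWeightedHomogeneous w (psi k m d) ((k - d) * A + (m - d) * B + d * E) := by
  have hX := fun i => isWeightedHomogeneous_X ℂ w i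
  have e1 : IsWeightedHomogeneous w (X 0 * X 4 + X 1 * X 5 : MvPolynomial (Fin 6) ℂ) A :=
    (h1 ▸ (hX 0).mul (hX 4)).add (h1' ▸ (hX 1).mul (hX 5))
  have e2 : IsWeightedHomogeneous w (X 2 * X 4 + X 3 * X 5 : MvPolynomial (Fin 6) ℂ) B :=
    (h2 ▸ (hX 2).mul (hX 4)).add (h2' ▸ (hX 3).mul (hX 5))
  have e3 : IsWeightedHomogeneous w (X 0 * X 3 - X 1 * X 2 : MvPolynomial (Fin 6) ℂ) E :=
    (weightedHomogeneousSubmodule ℂ w E).sub_mem (h3 ▸ (hX 0).mul (hX 3))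
      (h3' ▸ (hX 1).mul (hX 2))
  have := ((e1.pow (k - d)).mul (e2.pow (m - d))).mul (e3.pow d)
  simpa only [smul_eq_mul, psi] using this

lemma psi_supp (k m d : ℕ) (hdk : d ≤ k) (hdm : d ≤ m) (c : Fin 6 →₀ ℕ)
    (hc : coeff c (psi k m d) ≠ 0) :
    c 0 + c 1 = k ∧ c 2 + c 3 = m ∧ c 4 + c 5 = m + k - 2 * d := by
  have a1 := psi_whom k m d ![1, 1, 0, 0, 0, 0] 1 0 1 rfl rfl rfl rfl rfl rfl hc
  have a2 := psi_whom k m d ![0, 0, 1, 1, 0, 0] 0 1 1 rfl rfl rfl rfl rfl rfl hc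
  have a3 := psi_whom k m d ![0, 0, 0, 0, 1, 1] 1 1 0 rfl rfl rfl rfl rfl rfl hc
  rw [Finsupp.weight_apply, Finsupp.sum_fintype _ _ (by simp)] at a1 a2 a3
  simp [Fin.sum_univ_six] at a1 a2 a3
  omega

/-- for `0 ≤ d ≤ min(k,m)`, the space of polynomials
`F ∈ ℂ[N₁,N₂,e₁,e₂,ε₁,ε₂]` that are homogeneous of degree `k` in `(N₁,N₂)`, of degree `m`
in `(e₁,e₂)` and of degree `m+k−2d` in `(ε₁,ε₂)`, and invariant under `SL(2,ℝ)`, is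
one-dimensional, spanned by `ψ`. -/
theorem stmt6 (k m d : ℕ) (hdk : d ≤ k) (hdm : d ≤ m) :
    (∀ F : MvPolynomial (Fin 6) ℂ,
      ((∀ c ∈ F.support, c 0 + c 1 = k ∧ c 2 + c 3 = m ∧ c 4 + c 5 = m + k - 2 * d) ∧
        ∀ g : Matrix.SpecialLinearGroup (Fin 2) ℝ, slAct g F = F)
      ↔ ∃ a : ℂ, F = a • psi k m d) ∧
    psi k m d ≠ 0 := by
  constructor
  · intro F
    constructor
    · rintro ⟨hs, hF⟩
      exact invariant_eq k m d hdk hdm F hs hF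
    · rintro ⟨a, rfl⟩
      refine ⟨fun c hc => psi_supp k m d hdk hdm c ?_, fun g => ?_⟩
      · rw [mem_support_iff, coeff_smul] at hc
        exact right_ne_zero_of_smul hc
      · rw [map_smul, slAct_psi]
  · intro h
    have := congrArg (eval ![1, 0, 0, 1, 1, 1]) h
    simp [psi] at this
end
end

section
/- Let m, k be nonnegative integers and let f₀, …, f_m : ℝ² → ℂ be smooth functions. For 0 ≤ q ≤ m + k + 1 define g_q := Σ binom(k+1, r) ∂₁^{k+1−r}∂₂^{r} f_j, the sum being over all pairs (j, r) with 0 ≤ j ≤ m, 0 ≤ r ≤ k + 1 and j + r = q. Then for every integer i with 0 ≤ i ≤ k one has Σ_{r=0}^{m+1} (−1)^r · ( binom(m+1, r) / binom(m+k+1, m+1+i−r) ) · ∂₁^{m+1−r}∂₂^{r} g_{m+1+i−r} = 0 identically on ℝ². (Equivalently: the composition 𝒫^{k}_{m+k+1,m+1} ∘ 𝒞^{m+k+1}_{m,k+1} of the PRV operator with the Cartan operator is the zero operator.) -/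
open Finset

/-- Partial derivative in the first coordinate direction of ℝ². -/
noncomputable def pd1 (F : ℝ × ℝ → ℂ) : ℝ × ℝ → ℂ := fun p => fderiv ℝ F p (1, 0)

/-- Partial derivative in the second coordinate direction of ℝ². -/
noncomputable def pd2 (F : ℝ × ℝ → ℂ) : ℝ × ℝ → ℂ := fun p => fderiv ℝ F p (0, 1)

lemma key_nat (m k j q : ℕ) (hj : j ≤ m) (hq : q ≤ m + k + 1) :
    (if j ≤ q then Nat.choose (k + 1) (q - j) else 0) * Nat.factorial (m + k + 1)
      = Nat.choose (m + k + 1) q * (Nat.factorial (k + 1) * (q.descFactorial j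
        * (m + k + 1 - q).descFactorial (m - j))) := by
  split_ifs with h
  · obtain ⟨s, rfl⟩ := Nat.exists_eq_add_of_le h
    by_cases hs : s ≤ k + 1
    · obtain ⟨t, ht⟩ := Nat.exists_eq_add_of_le hs
      obtain ⟨l, rfl⟩ := Nat.exists_eq_add_of_le hj
      have e1 : j + l + k + 1 = (j + s) + (l + t) := by omega
      have e2 : (j + s) + (l + t) - (j + s) = l + t := by omega
      have e3 : j + l - j = l := by omega
      have e4 : j + s - j = s := by omega
      rw [e1, e2, e3, e4, ht]
      have a1 := Nat.add_choose_mul_factorial_mul_factorial s t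
      have a2 := Nat.add_choose_mul_factorial_mul_factorial (j + s) (l + t)
      have a3 := Nat.factorial_mul_descFactorial (n := j + s) (k := j) (by omega)
      have a4 := Nat.factorial_mul_descFactorial (n := l + t) (k := l) (by omega)
      rw [← Nat.choose_symm_add] at a1 a2
      rw [e4] at a3
      rw [Nat.add_sub_cancel_left] at a4
      have p : 0 < s.factorial * t.factorial := by positivity
      apply Nat.eq_of_mul_eq_mul_left p
      rw [← a2, ← a3, ← a4]
      rw [← a1]
      ring
    · rw [Nat.choose_eq_zero_of_lt (by omega),
        (Nat.descFactorial_eq_zero_iff_lt (n := m + k + 1 - (j + s))).2 (by omega)]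
      simp
  · rw [(Nat.descFactorial_eq_zero_iff_lt (n := q)).2 (by omega)]
    simp

lemma key_div (m k j q : ℕ) (hj : j ≤ m) (hq : q ≤ m + k + 1) :
    ((if j ≤ q then Nat.choose (k + 1) (q - j) else 0 : ℕ) : ℂ) / (Nat.choose (m + k + 1) q : ℂ)
      = ((Nat.factorial (k + 1) : ℂ) / (Nat.factorial (m + k + 1) : ℂ)) *
        ((q.descFactorial j : ℂ) * ((m + k + 1 - q).descFactorial (m - j) : ℂ)) := by
  have h := key_nat m k j q hj hq
  have h' := congrArg (Nat.cast (R := ℂ)) h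
  rw [Nat.cast_mul, Nat.cast_mul, Nat.cast_mul, Nat.cast_mul] at h'
  have c : (Nat.choose (m + k + 1) q : ℂ) ≠ 0 := by
    exact_mod_cast (Nat.choose_pos hq).ne'
  have d : (Nat.factorial (m + k + 1) : ℂ) ≠ 0 := by
    exact_mod_cast (Nat.factorial_pos _).ne'
  rw [div_mul_eq_mul_div, div_eq_div_iff c d, h']
  ring

open Polynomial in
lemma alt_sum_poly (P : ℂ[X]) (n : ℕ) (hP : P.natDegree < n) :
    ∑ r ∈ Finset.range (n + 1), (-1 : ℂ) ^ r * (Nat.choose n r : ℂ) * P.eval (r : ℂ) = 0 := by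
  have h := congrFun (Polynomial.fwdDiff_iter_eq_zero_of_degree_lt hP) 0
  rw [fwdDiff_iter_eq_sum_shift] at h
  have h2 := congrArg (fun z => (-1 : ℂ) ^ n * z) h
  simp only [Pi.zero_apply, mul_zero, Finset.mul_sum] at h2
  rw [← h2]
  refine Finset.sum_congr rfl fun r hr => ?_
  have hr : r ≤ n := by simpa [Nat.lt_succ_iff] using hr
  obtain ⟨t, rfl⟩ := Nat.exists_eq_add_of_le hr
  rw [Nat.add_sub_cancel_left]
  simp only [zero_add, nsmul_eq_mul, mul_one, zsmul_eq_mul]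
  push_cast
  have : (-1 : ℂ) ^ t * (-1 : ℂ) ^ t = 1 := by rw [← mul_pow]; simp
  rw [pow_add]
  linear_combination (-((-1 : ℂ) ^ r * ((r + t).choose r : ℂ) * P.eval (r : ℂ))) * this

open Polynomial in
lemma key_sum (m k i j : ℕ) (hj : j ≤ m) (hi : i ≤ k) :
    ∑ r ∈ Finset.range (m + 2), (-1 : ℂ) ^ r *
      ((Nat.choose (m + 1) r : ℂ) / (Nat.choose (m + k + 1) (m + 1 + i - r) : ℂ)) *
      ((if j ≤ m + 1 + i - r then Nat.choose (k + 1) (m + 1 + i - r - j) else 0 : ℕ) : ℂ) = 0 := by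
  let P : ℂ[X] := (descPochhammer ℂ j).comp (C ((m + 1 + i : ℕ) : ℂ) - X) *
    (descPochhammer ℂ (m - j)).comp (C ((k - i : ℕ) : ℂ) + X)
  have hP : P.natDegree < m + 1 := by
    refine lt_of_le_of_lt natDegree_mul_le ?_
    rw [natDegree_comp, natDegree_comp, descPochhammer_natDegree, descPochhammer_natDegree]
    have h1 : (C ((m + 1 + i : ℕ) : ℂ) - X).natDegree ≤ 1 := by
      refine (natDegree_sub_le _ _).trans ?_
      rw [natDegree_C, natDegree_X]
      simp
    have h2 : (C ((k - i : ℕ) : ℂ) + X).natDegree ≤ 1 := by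
      refine (natDegree_add_le _ _).trans ?_
      rw [natDegree_C, natDegree_X]
      simp
    have := Nat.mul_le_mul_left j h1
    have := Nat.mul_le_mul_left (m - j) h2
    omega
  have h := alt_sum_poly P (m + 1) hP
  have h2 := congrArg
    (fun z => ((Nat.factorial (k + 1) : ℂ) / (Nat.factorial (m + k + 1) : ℂ)) * z) h
  simp only [mul_zero, Finset.mul_sum] at h2
  rw [← h2]
  refine Finset.sum_congr rfl fun r hr => ?_
  have hr : r ≤ m + 1 := by
    have := Finset.mem_range.1 hr
    omega
  have hk := key_div m k j (m + 1 + i - r) hj (by omega)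
  have hPe : P.eval (r : ℂ) = (((m + 1 + i - r).descFactorial j : ℕ) : ℂ) *
      (((m + k + 1 - (m + 1 + i - r)).descFactorial (m - j) : ℕ) : ℂ) := by
    have e1 : ((m + 1 + i : ℕ) : ℂ) - (r : ℂ) = ((m + 1 + i - r : ℕ) : ℂ) := by
      rw [Nat.cast_sub (by omega)]
    have e2 : ((k - i : ℕ) : ℂ) + (r : ℂ) = ((m + k + 1 - (m + 1 + i - r) : ℕ) : ℂ) := by
      rw [← Nat.cast_add]
      congr 1
      omega
    simp only [P, eval_mul, eval_comp, eval_sub, eval_add, eval_C, eval_X]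
    rw [e1, e2, descPochhammer_eval_eq_descFactorial, descPochhammer_eval_eq_descFactorial]
  rw [hPe]
  linear_combination ((-1 : ℂ) ^ r * (Nat.choose (m + 1) r : ℂ)) * hk

/-- The space of smooth functions. -/
def SmoothFn : Submodule ℂ (ℝ × ℝ → ℂ) where
  carrier := {F | ContDiff ℝ (⊤ : ℕ∞) F}
  add_mem' := by
    intro a b ha hb
    simp only [Set.mem_setOf_eq] at *
    exact ha.add hb
  zero_mem' := by
    simp only [Set.mem_setOf_eq]
    exact contDiff_const
  smul_mem' := by
    intro c a ha
    simp only [Set.mem_setOf_eq] at *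
    exact ha.const_smul c

lemma SmoothFn_contDiff (F : SmoothFn) : ContDiff ℝ (⊤ : ℕ∞) F.1 := F.2

lemma smooth_dir (v : ℝ × ℝ) {F : ℝ × ℝ → ℂ} (hF : ContDiff ℝ (⊤ : ℕ∞) F) :
    ContDiff ℝ (⊤ : ℕ∞) (fun p => fderiv ℝ F p v) :=
  (hF.fderiv_right (m := (⊤ : ℕ∞)) (by simp)).clm_apply contDiff_const

/-- Directional derivative on smooth functions. -/
noncomputable def dirD (v : ℝ × ℝ) : SmoothFn →ₗ[ℂ] SmoothFn where
  toFun F := ⟨fun p => fderiv ℝ F.1 p v, smooth_dir v F.2⟩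
  map_add' F G := by
    apply Subtype.ext
    funext p
    have hF : DifferentiableAt ℝ F.1 p := ((SmoothFn_contDiff F).differentiable (by simp)) p
    have hG : DifferentiableAt ℝ G.1 p := ((SmoothFn_contDiff G).differentiable (by simp)) p
    change fderiv ℝ (F.1 + G.1) p v = fderiv ℝ F.1 p v + fderiv ℝ G.1 p v
    rw [fderiv_add hF hG]
    rfl
  map_smul' c F := by
    apply Subtype.ext
    funext p
    have hF : DifferentiableAt ℝ F.1 p := ((SmoothFn_contDiff F).differentiable (by simp)) p
    change fderiv ℝ (c • F.1) p v = c • fderiv ℝ F.1 p v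
    rw [fderiv_const_smul hF c]
    rfl

lemma dirD_comm (v w : ℝ × ℝ) : Commute (dirD v) (dirD w) := by
  apply LinearMap.ext
  intro F
  apply Subtype.ext
  funext p
  change fderiv ℝ (fun x => fderiv ℝ F.1 x w) p v = fderiv ℝ (fun x => fderiv ℝ F.1 x v) p w
  have hF : ContDiff ℝ (⊤ : ℕ∞) F.1 := F.2
  have hd : DifferentiableAt ℝ (fderiv ℝ F.1) p :=
    ((hF.fderiv_right (m := (⊤ : ℕ∞)) (by simp)).differentiable (by simp)) p
  rw [fderiv_clm_apply hd (differentiableAt_const _), fderiv_clm_apply hd (differentiableAt_const _)]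
  have hs : IsSymmSndFDerivAt ℝ F.1 p :=
    hF.contDiffAt.isSymmSndFDerivAt (by simp only [minSmoothness_of_isRCLikeNormedField]; exact WithTop.coe_le_coe.2 (le_top : (2 : ℕ∞) ≤ ⊤))
  simpa using hs v w

lemma coe_D1_pow (n : ℕ) (F : SmoothFn) : (((dirD (1, 0)) ^ n) F : SmoothFn).1 = pd1^[n] F.1 := by
  induction n with
  | zero => rfl
  | succ n ih => rw [pow_succ', Function.iterate_succ_apply', ← ih]; rfl

lemma coe_D2_pow (n : ℕ) (F : SmoothFn) : (((dirD (0, 1)) ^ n) F : SmoothFn).1 = pd2^[n] F.1 := by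
  induction n with
  | zero => rfl
  | succ n ih => rw [pow_succ', Function.iterate_succ_apply', ← ih]; rfl

lemma cartan_inner_sum {V : Type*} [AddCommGroup V] [Module ℂ V] (A B : V →ₗ[ℂ] V) (hAB : Commute A B)
    (m k i j r : ℕ) (hj : j ≤ m) (hi : i ≤ k) (hr : r ≤ m + 1) (F : V) :
    (A ^ (m + 1 - r)) ((B ^ r) (∑ s ∈ Finset.range (k + 2), if j + s = m + 1 + i - r then
        (Nat.choose (k + 1) s : ℂ) • (A ^ (k + 1 - s)) ((B ^ s) F) else 0))
      = ((if j ≤ m + 1 + i - r then Nat.choose (k + 1) (m + 1 + i - r - j) else 0 : ℕ) : ℂ) •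
        (A ^ (k + 1 + j - i)) ((B ^ (m + 1 + i - j)) F) := by
  rw [map_sum, map_sum]
  have step : ∀ s ∈ Finset.range (k + 2),
      (A ^ (m + 1 - r)) ((B ^ r) (if j + s = m + 1 + i - r then
        (Nat.choose (k + 1) s : ℂ) • (A ^ (k + 1 - s)) ((B ^ s) F) else 0))
      = if j + s = m + 1 + i - r then (Nat.choose (k + 1) s : ℂ) •
        (A ^ (k + 1 + j - i)) ((B ^ (m + 1 + i - j)) F) else 0 := by
    intro s hs
    have hs := Finset.mem_range.1 hs
    split_ifs with h
    · rw [map_smul, map_smul]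
      congr 1
      have e1 : k + 1 + j - i = (m + 1 - r) + (k + 1 - s) := by omega
      have e2 : m + 1 + i - j = r + s := by omega
      rw [e1, e2, pow_add, pow_add]
      have hc : (B ^ r) ((A ^ (k + 1 - s)) ((B ^ s) F)) =
          (A ^ (k + 1 - s)) ((B ^ r) ((B ^ s) F)) :=
        (LinearMap.congr_fun ((hAB.pow_pow (k + 1 - s) r).eq) ((B ^ s) F)).symm
      rw [hc]
      rfl
    · simp
  rw [Finset.sum_congr rfl step]
  by_cases hq : j ≤ m + 1 + i - r
  · rw [if_pos hq]
    by_cases hlt : m + 1 + i - r - j < k + 2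
    · rw [Finset.sum_eq_single (m + 1 + i - r - j)]
      · rw [if_pos (by omega)]
      · intro s _ hne
        rw [if_neg (by omega)]
      · intro hn
        exact absurd (Finset.mem_range.2 hlt) hn
    · rw [Nat.choose_eq_zero_of_lt (by omega), Nat.cast_zero, zero_smul]
      refine Finset.sum_eq_zero fun s hs => ?_
      have hs := Finset.mem_range.1 hs
      rw [if_neg (by omega)]
  · rw [if_neg hq, Nat.cast_zero, zero_smul]
    refine Finset.sum_eq_zero fun s _ => ?_
    rw [if_neg (by omega)]

theorem stmt7 (m k : ℕ) (f : Fin (m + 1) → ℝ × ℝ → ℂ)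
    (hf : ∀ j, ContDiff ℝ (⊤ : ℕ∞) (f j))
    (g : ℕ → ℝ × ℝ → ℂ)
    (hg : ∀ q, g q = ∑ j : Fin (m + 1), ∑ r ∈ Finset.range (k + 2),
      if (j : ℕ) + r = q then
        (Nat.choose (k + 1) r : ℂ) • pd1^[k + 1 - r] (pd2^[r] (f j))
      else 0) :
    ∀ i ≤ k, ∀ p : ℝ × ℝ,
      ∑ r ∈ Finset.range (m + 2),
        ((-1 : ℂ)) ^ r
          * ((Nat.choose (m + 1) r : ℂ) / (Nat.choose (m + k + 1) (m + 1 + i - r) : ℂ))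
          * (pd1^[m + 1 - r] (pd2^[r] (g (m + 1 + i - r))) p) = 0 := by
  intro i hi p
  let A := dirD (1, 0)
  let B := dirD (0, 1)
  let F : Fin (m + 1) → SmoothFn := fun j => ⟨f j, hf j⟩
  let G : ℕ → SmoothFn := fun q => ∑ j : Fin (m + 1), ∑ r ∈ Finset.range (k + 2),
      if (j : ℕ) + r = q then
        (Nat.choose (k + 1) r : ℂ) • (A ^ (k + 1 - r)) ((B ^ r) (F j))
      else 0
  have hG : ∀ q, g q = (G q).1 := by
    intro q
    rw [hg q]
    change _ = SmoothFn.subtype (G q)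
    simp only [G, map_sum]
    refine Finset.sum_congr rfl fun j _ => Finset.sum_congr rfl fun r _ => ?_
    split_ifs with h
    · rw [map_smul]
      congr 1
      change _ = ((A ^ (k + 1 - r)) ((B ^ r) (F j))).1
      rw [coe_D1_pow, coe_D2_pow]
    · simp
  have hterm : ∀ r ∈ Finset.range (m + 2),
      pd1^[m + 1 - r] (pd2^[r] (g (m + 1 + i - r))) p
        = ∑ j : Fin (m + 1), ((if (j : ℕ) ≤ m + 1 + i - r then
            Nat.choose (k + 1) (m + 1 + i - r - j) else 0 : ℕ) : ℂ) *
          ((A ^ (k + 1 + j - i)) ((B ^ (m + 1 + i - j)) (F j))).1 p := by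
    intro r hr
    have hr := Finset.mem_range.1 hr
    rw [hG, ← coe_D2_pow, ← coe_D1_pow]
    have h1 : (A ^ (m + 1 - r)) ((B ^ r) (G (m + 1 + i - r))) = ∑ j : Fin (m + 1),
        ((if (j : ℕ) ≤ m + 1 + i - r then
            Nat.choose (k + 1) (m + 1 + i - r - j) else 0 : ℕ) : ℂ) •
          (A ^ (k + 1 + j - i)) ((B ^ (m + 1 + i - j)) (F j)) := by
      simp only [G]
      rw [map_sum, map_sum]
      refine Finset.sum_congr rfl fun j _ => ?_
      have := j.2
      exact cartan_inner_sum A B (dirD_comm _ _) m k i j r (by omega) hi (by omega) (F j)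
    have h2 := congrArg (fun H : SmoothFn => SmoothFn.subtype H p) h1
    simp only [map_sum, Finset.sum_apply, map_smul, Pi.smul_apply, smul_eq_mul] at h2
    exact h2
  rw [Finset.sum_congr rfl fun r hr => by rw [hterm r hr, Finset.mul_sum]]
  rw [Finset.sum_comm]
  refine Finset.sum_eq_zero fun j _ => ?_
  have := j.2
  have hs := key_sum m k i j (by omega) hi
  simp only [← mul_assoc]
  rw [← Finset.sum_mul, hs, zero_mul]
end
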